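/- Let ρ ∝ exp(−V) be a probability distribution on ℝ^d where V is convex and L-smooth (‖∇²V‖_op ≤ L pointwise). Let ρ_t := ρ ∗ N(0, tI) denote the heat-flow smoothing. Then for every integer q ≥ 2 and every 0 ≤ t < 1/(Lq), the Rényi divergence satisfies R_q(ρ_t ‖ ρ) ≤ (d/(2(q−1))) · log(1/(1 − Lqt)). -/

import Mathlib

open MeasureTheory

noncomputable section

/-- Rényi divergence of order q: `R_q(μ‖ν) = (1/(q−1)) log ∫ (dμ/dν)^q dν`. -/
def renyi {α : Type*} [MeasurableSpace α] (q : ℝ) (μ ν : Measure α) : ℝ :=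
  (1/(q-1)) * Real.log (∫ x, ((μ.rnDeriv ν x).toReal) ^ q ∂ν)

/-- Density of the centered Gaussian N(0, tI) on ℝ^d. -/
def gaussPdf (d : ℕ) (t : ℝ) (x : EuclideanSpace ℝ (Fin d)) : ℝ :=
  (2 * Real.pi * t) ^ (-(d:ℝ)/2) * Real.exp (-‖x‖^2 / (2*t))

/-- The centered Gaussian measure N(0, tI) on ℝ^d. -/
def gaussMeasure (d : ℕ) (t : ℝ) : Measure (EuclideanSpace ℝ (Fin d)) :=
  volume.withDensity fun x => ENNReal.ofReal (gaussPdf d t x)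

/-- Convolution of two measures on ℝ^d. -/
def mconv {d : ℕ} (μ ν : Measure (EuclideanSpace ℝ (Fin d))) :
    Measure (EuclideanSpace ℝ (Fin d)) :=
  (μ.prod ν).map fun p => p.1 + p.2

section helpers

variable {d : ℕ}

lemma aux_line (V : EuclideanSpace ℝ (Fin d) → ℝ) (hV : ContDiff ℝ 2 V)
    (x u : EuclideanSpace ℝ (Fin d)) (s : ℝ) :
    HasDerivAt (fun s : ℝ => V (x + s • u)) (inner ℝ (gradient V (x + s • u)) u) s := by
  have h1 : HasFDerivAt V (fderiv ℝ V (x + s • u)) (x + s • u) :=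
    (hV.differentiable (by norm_num) _).hasFDerivAt
  have h2 : HasDerivAt (fun s : ℝ => x + s • u) u s := by
    simpa using ((hasDerivAt_id s).smul_const u).const_add x
  have h3 := h1.comp_hasDerivAt s h2
  have e : inner ℝ (gradient V (x + s • u)) u = fderiv ℝ V (x + s • u) u := by simp
  rw [e]
  exact h3

lemma aux_convex (V : EuclideanSpace ℝ (Fin d) → ℝ) (hV : ContDiff ℝ 2 V)
    (hconv : ConvexOn ℝ Set.univ V) (x u : EuclideanSpace ℝ (Fin d)) :
    V x + inner ℝ (gradient V x) u ≤ V (x + u) := by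
  have hc : ConvexOn ℝ Set.univ (fun s : ℝ => V (x + s • u)) := by
    have := hconv.comp_affineMap (AffineMap.lineMap x (x + u) : ℝ →ᵃ[ℝ] _)
    have e : (fun s : ℝ => V (x + s • u)) = V ∘ (AffineMap.lineMap x (x + u) : ℝ →ᵃ[ℝ] _) := by
      ext s
      simp [AffineMap.lineMap_apply, add_comm]
    rw [e]
    exact this
  have h := hc.le_slope_of_hasDerivAt (Set.mem_univ (0:ℝ)) (Set.mem_univ (1:ℝ)) one_pos
    (aux_line V hV x u 0)
  simp only [slope_def_field, zero_smul, add_zero, one_smul, sub_zero, div_one] at h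
  linarith

lemma aux_smooth (L : ℝ) (V : EuclideanSpace ℝ (Fin d) → ℝ) (hV : ContDiff ℝ 2 V)
    (hsmooth : ∀ x y, ‖gradient V x - gradient V y‖ ≤ L * ‖x - y‖)
    (x u : EuclideanSpace ℝ (Fin d)) :
    V (x + u) ≤ V x + inner ℝ (gradient V x) u + L * ‖u‖^2 / 2 := by
  let g : ℝ → ℝ := fun s => V (x + s • u) - s * inner ℝ (gradient V x) u - s^2 * (L * ‖u‖^2 / 2)
  have hg : ∀ s, HasDerivAt g (inner ℝ (gradient V (x + s • u)) u - inner ℝ (gradient V x) u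
      - s * (L * ‖u‖^2)) s := by
    intro s
    have := ((aux_line V hV x u s).sub ((hasDerivAt_id s).mul_const (inner ℝ (gradient V x) u))).sub
      ((hasDerivAt_pow 2 s).mul_const (L * ‖u‖^2 / 2))
    refine this.congr_deriv ?_
    norm_num
    ring
  have hanti : AntitoneOn g (Set.Icc 0 1) := by
    apply antitoneOn_of_deriv_nonpos (convex_Icc 0 1)
    · exact fun s _ => (hg s).continuousAt.continuousWithinAt
    · exact fun s _ => (hg s).differentiableAt.differentiableWithinAt
    · intro s hs
      rw [interior_Icc] at hs
      rw [(hg s).deriv, ← inner_sub_left]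
      have h1 := real_inner_le_norm (gradient V (x + s • u) - gradient V x) u
      have h2 := hsmooth (x + s • u) x
      rw [add_sub_cancel_left, norm_smul, Real.norm_eq_abs, abs_of_pos hs.1] at h2
      have h3 := mul_le_mul_of_nonneg_right h2 (norm_nonneg u)
      nlinarith
  have := hanti (Set.left_mem_Icc.2 zero_le_one) (Set.right_mem_Icc.2 zero_le_one) zero_le_one
  simp only [g, zero_smul, add_zero, one_smul, one_mul, zero_mul, one_pow, sub_zero,
    ne_eq, OfNat.ofNat_ne_zero, not_false_eq_true, zero_pow] at this
  linarith

lemma aux_gauss_nonneg (t : ℝ) (ht : 0 ≤ t) (x : EuclideanSpace ℝ (Fin d)) :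
    0 ≤ gaussPdf d t x := by
  unfold gaussPdf; positivity

lemma aux_gauss_cont (t : ℝ) : Continuous (gaussPdf d t) := by
  unfold gaussPdf; fun_prop

/-- basic Gaussian lintegral -/
lemma aux_lint (b : ℝ) (hb : 0 < b) :
    ∫⁻ x : EuclideanSpace ℝ (Fin d), ENNReal.ofReal (Real.exp (-b * ‖x‖^2))
      = ENNReal.ofReal ((Real.pi / b) ^ ((d:ℝ)/2)) := by
  have hi : Integrable (fun x : EuclideanSpace ℝ (Fin d) => Real.exp (-b * ‖x‖^2)) := by
    have := (GaussianFourier.integrable_cexp_neg_mul_sq_norm_add (V := EuclideanSpace ℝ (Fin d))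
      (b := (b:ℂ)) (by simpa using hb) 0 0).norm
    refine this.congr (Filter.Eventually.of_forall fun x => ?_)
    simp [Complex.norm_exp, ← Complex.ofReal_pow]
  rw [← ofReal_integral_eq_lintegral_ofReal hi (Filter.Eventually.of_forall fun x => by positivity),
    GaussianFourier.integral_rexp_neg_mul_sq_norm hb]
  simp

lemma aux_gauss_quad (t L : ℝ) (ht : 0 < t) (hL : L * t < 1) :
    ∫⁻ x : EuclideanSpace ℝ (Fin d), ENNReal.ofReal (gaussPdf d t x * Real.exp (L * ‖x‖^2/2))
      = ENNReal.ofReal ((1 - L * t) ^ (-(d:ℝ)/2)) := by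
  have hb : 0 < (1 - L * t) / (2 * t) := div_pos (by linarith) (by linarith)
  have h1 : 0 < 1 - L * t := by linarith
  have : ∀ x : EuclideanSpace ℝ (Fin d), ENNReal.ofReal (gaussPdf d t x * Real.exp (L * ‖x‖^2/2))
      = ENNReal.ofReal ((2 * Real.pi * t) ^ (-(d:ℝ)/2)) *
        ENNReal.ofReal (Real.exp (-((1 - L * t) / (2 * t)) * ‖x‖^2)) := by
    intro x
    rw [← ENNReal.ofReal_mul (by positivity), gaussPdf, mul_assoc, ← Real.exp_add]
    congr 3
    field_simp
    ring
  simp_rw [this]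
  rw [lintegral_const_mul _ (by fun_prop), aux_lint _ hb, ← ENNReal.ofReal_mul (by positivity)]
  congr 1
  have e : Real.pi / ((1 - L * t) / (2 * t)) = (2 * Real.pi * t) * (1 - L * t)⁻¹ := by
    field_simp
  rw [e, Real.mul_rpow (x := 2 * Real.pi * t) (by positivity) (by positivity), ← mul_assoc,
    ← Real.rpow_add (by positivity), Real.inv_rpow h1.le, ← Real.rpow_neg h1.le]
  rw [show -(d:ℝ)/2 + d/2 = 0 by ring, Real.rpow_zero, one_mul, neg_div]

lemma aux_gauss_lin_eq (t : ℝ) (ht : 0 < t) (a : EuclideanSpace ℝ (Fin d)) :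
    ∫⁻ x : EuclideanSpace ℝ (Fin d), ENNReal.ofReal (gaussPdf d t x * Real.exp (inner ℝ a x))
      = ENNReal.ofReal (Real.exp (t * ‖a‖^2 / 2)) := by
  have h0 : ∫⁻ x : EuclideanSpace ℝ (Fin d), ENNReal.ofReal (gaussPdf d t x) = 1 := by
    simpa using aux_gauss_quad (d := d) t 0 ht (by simp)
  have : ∀ x : EuclideanSpace ℝ (Fin d), ENNReal.ofReal (gaussPdf d t x * Real.exp (inner ℝ a x))
      = ENNReal.ofReal (Real.exp (t * ‖a‖^2 / 2)) * ENNReal.ofReal (gaussPdf d t (x - t • a)) := by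
    intro x
    rw [← ENNReal.ofReal_mul (by positivity), gaussPdf, gaussPdf, mul_left_comm, mul_assoc,
      ← Real.exp_add, ← Real.exp_add]
    congr 3
    rw [norm_sub_sq_real, inner_smul_right, norm_smul, Real.norm_eq_abs, mul_pow, sq_abs,
      real_inner_comm]
    field_simp
    ring
  simp_rw [this]
  have hm : Measurable (fun x : EuclideanSpace ℝ (Fin d) =>
      ENNReal.ofReal (gaussPdf d t (x - t • a))) := by
    have := aux_gauss_cont (d := d) t
    fun_prop
  rw [lintegral_const_mul _ hm, lintegral_sub_right_eq_self
    (fun x => ENNReal.ofReal (gaussPdf d t x)), h0, mul_one]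

lemma aux_gauss_lin_le (t : ℝ) (ht : 0 ≤ t) (a : EuclideanSpace ℝ (Fin d)) :
    ∫⁻ x : EuclideanSpace ℝ (Fin d), ENNReal.ofReal (gaussPdf d t x * Real.exp (inner ℝ a x))
      ≤ ENNReal.ofReal (Real.exp (t * ‖a‖^2 / 2)) := by
  rcases ht.eq_or_lt with rfl | ht
  · rcases Nat.eq_zero_or_pos d with rfl | hd
    · have : ∀ x : EuclideanSpace ℝ (Fin 0), x = 0 := fun x => Subsingleton.elim _ _
      have h0 := aux_gauss_lin_eq (d := 0) 1 one_pos 0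
      simp [gaussPdf, this] at h0 ⊢
      exact h0.le
    · have : (-(d:ℝ)/2) ≠ 0 := by
        have : (0:ℝ) < d := by exact_mod_cast hd
        intro h; linarith
      simp [gaussPdf, Real.zero_rpow this]
  · exact (aux_gauss_lin_eq t ht a).le

/-- subgaussianity of the gradient -/
lemma aux_subgauss (L : ℝ) (V : EuclideanSpace ℝ (Fin d) → ℝ) (hV : ContDiff ℝ 2 V)
    (hsmooth : ∀ x y, ‖gradient V x - gradient V y‖ ≤ L * ‖x - y‖)
    (Z : ℝ) (hZ : 0 < Z)
    (h1 : ∫⁻ x, ENNReal.ofReal (Real.exp (-(V x)) / Z) = 1) (u : EuclideanSpace ℝ (Fin d)) :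
    ∫⁻ x, ENNReal.ofReal (Real.exp (-(V x)) / Z) * ENNReal.ofReal (Real.exp (inner ℝ (gradient V x) u))
      ≤ ENNReal.ofReal (Real.exp (L * ‖u‖^2/2)) := by
  have hm : Measurable (fun x => ENNReal.ofReal (Real.exp (-(V x)) / Z)) := by
    have := hV.continuous
    fun_prop
  calc _ ≤ ∫⁻ x, ENNReal.ofReal (Real.exp (L * ‖u‖^2/2)) *
            ENNReal.ofReal (Real.exp (-(V (x - u))) / Z) := by
        apply lintegral_mono
        intro x
        dsimp only
        rw [← ENNReal.ofReal_mul (by positivity), ← ENNReal.ofReal_mul (by positivity)]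
        apply ENNReal.ofReal_le_ofReal
        rw [div_mul_eq_mul_div, ← mul_div_assoc, ← Real.exp_add, ← Real.exp_add]
        refine div_le_div_of_nonneg_right (Real.exp_le_exp.2 ?_) hZ.le
        have := aux_smooth L V hV hsmooth x (-u)
        rw [inner_neg_right, norm_neg, ← sub_eq_add_neg] at this
        linarith
    _ = _ := by
        rw [lintegral_const_mul _ (show Measurable (fun x => ENNReal.ofReal (Real.exp (-(V (x - u))) / Z))
          from hm.comp (measurable_id.sub_const u)), lintegral_sub_right_eq_self
          (fun x => ENNReal.ofReal (Real.exp (-(V x)) / Z)), h1, mul_one]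

lemma aux_grad_cont (V : EuclideanSpace ℝ (Fin d) → ℝ) (hV : ContDiff ℝ 2 V) :
    Continuous (gradient V) := by
  unfold gradient
  exact (LinearIsometryEquiv.continuous _).comp (hV.continuous_fderiv (by norm_num))

/-- exponential moment of the squared gradient -/
lemma aux_moment (L : ℝ) (V : EuclideanSpace ℝ (Fin d) → ℝ) (hV : ContDiff ℝ 2 V)
    (hsmooth : ∀ x y, ‖gradient V x - gradient V y‖ ≤ L * ‖x - y‖)
    (Z : ℝ) (hZ : 0 < Z)
    (h1 : ∫⁻ x, ENNReal.ofReal (Real.exp (-(V x)) / Z) = 1) (s : ℝ) (hs : 0 ≤ s)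
    (hLs : L * s < 1) :
    ∫⁻ x, ENNReal.ofReal (Real.exp (-(V x)) / Z) *
        ENNReal.ofReal (Real.exp (s * ‖gradient V x‖^2 / 2))
      ≤ ENNReal.ofReal ((1 - L * s) ^ (-(d:ℝ)/2)) := by
  rcases hs.eq_or_lt with rfl | hs
  · simp [h1]
  have hVc := hV.continuous
  have hG := aux_grad_cont V hV
  have hg := aux_gauss_cont (d := d) s
  calc _ = ∫⁻ x, ∫⁻ z, ENNReal.ofReal (Real.exp (-(V x)) / Z) *
            ENNReal.ofReal (gaussPdf d s z * Real.exp (inner ℝ (gradient V x) z)) := by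
        congr 1; ext x
        rw [lintegral_const_mul _ (by fun_prop), aux_gauss_lin_eq s hs]
    _ = ∫⁻ z, ∫⁻ x, ENNReal.ofReal (Real.exp (-(V x)) / Z) *
            ENNReal.ofReal (gaussPdf d s z * Real.exp (inner ℝ (gradient V x) z)) := by
        apply lintegral_lintegral_swap
        apply Measurable.aemeasurable
        refine Measurable.mul (f := fun p : EuclideanSpace ℝ (Fin d) × EuclideanSpace ℝ (Fin d) =>
          ENNReal.ofReal (Real.exp (-(V p.1)) / Z))
          (g := fun p => ENNReal.ofReal (gaussPdf d s p.2 *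
            Real.exp (inner ℝ (gradient V p.1) p.2))) ?_ ?_
        · fun_prop
        · apply ENNReal.measurable_ofReal.comp
          apply Continuous.measurable
          fun_prop
    _ ≤ ∫⁻ z, ENNReal.ofReal (gaussPdf d s z * Real.exp (L * ‖z‖^2/2)) := by
        apply lintegral_mono
        intro z
        dsimp only
        simp_rw [ENNReal.ofReal_mul (aux_gauss_nonneg s hs.le z)]
        simp_rw [mul_left_comm _ (ENNReal.ofReal (gaussPdf d s z))]
        rw [lintegral_const_mul _ (by fun_prop)]
        gcongr
        exact aux_subgauss L V hV hsmooth Z hZ h1 z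
    _ = _ := aux_gauss_quad s L hs hLs

lemma aux_density_le (V : EuclideanSpace ℝ (Fin d) → ℝ) (hV : ContDiff ℝ 2 V)
    (hconv : ConvexOn ℝ Set.univ V) (Z : ℝ) (hZ : 0 < Z) (t : ℝ) (ht : 0 ≤ t)
    (x : EuclideanSpace ℝ (Fin d)) :
    ∫⁻ y, ENNReal.ofReal (gaussPdf d t y) * ENNReal.ofReal (Real.exp (-(V (-y + x))) / Z)
      ≤ ENNReal.ofReal (Real.exp (-(V x)) / Z) *
        ENNReal.ofReal (Real.exp (t * ‖gradient V x‖^2/2)) := by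
  have hg := aux_gauss_cont (d := d) t
  calc _ ≤ ∫⁻ y, ENNReal.ofReal (Real.exp (-(V x)) / Z) *
        ENNReal.ofReal (gaussPdf d t y * Real.exp (inner ℝ (gradient V x) y)) := by
        apply lintegral_mono
        intro y
        dsimp only
        rw [ENNReal.ofReal_mul (aux_gauss_nonneg t ht y), mul_left_comm]
        gcongr
        rw [← ENNReal.ofReal_mul (by positivity)]
        apply ENNReal.ofReal_le_ofReal
        rw [div_mul_eq_mul_div, ← Real.exp_add]
        gcongr
        have := aux_convex V hV hconv x (-y)
        rw [inner_neg_right, add_comm x] at this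
        linarith
    _ ≤ _ := by
        rw [lintegral_const_mul _ (by fun_prop)]
        gcongr
        exact aux_gauss_lin_le t ht _

end helpers

/-- For ρ ∝ exp(−V) with V convex and L-smooth, integer q ≥ 2 and
0 ≤ t < 1/(Lq), the heat-flow smoothing ρ_t = ρ ∗ N(0,tI) satisfies
R_q(ρ_t‖ρ) ≤ (d/(2(q−1))) log(1/(1 − Lqt)). -/
theorem renyi_after_heat {d : ℕ} (L : ℝ) (hL : 0 < L)
    (V : EuclideanSpace ℝ (Fin d) → ℝ) (hV : ContDiff ℝ 2 V)
    (hconv : ConvexOn ℝ Set.univ V)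
    (hsmooth : ∀ x y, ‖gradient V x - gradient V y‖ ≤ L * ‖x - y‖)
    (Z : ℝ) (hZ : Z = ∫ x, Real.exp (-(V x)))
    (ρ : Measure (EuclideanSpace ℝ (Fin d)))
    (hρ : ρ = volume.withDensity fun x => ENNReal.ofReal (Real.exp (-(V x)) / Z))
    (q : ℕ) (hq : 2 ≤ q) (t : ℝ) (ht : 0 ≤ t) (ht' : t < 1/(L*q)) :
    renyi q (mconv ρ (gaussMeasure d t)) ρ
      ≤ ((d:ℝ)/(2*((q:ℝ)-1))) * Real.log (1/(1 - L*q*t)) := by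
  set f : EuclideanSpace ℝ (Fin d) → ENNReal :=
    fun x => ENNReal.ofReal (Real.exp (-(V x)) / Z) with hf
  have hq0 : (0:ℝ) < q := by positivity
  have hq1 : (0:ℝ) < (q:ℝ) - 1 := by
    have : (2:ℝ) ≤ q := by exact_mod_cast hq
    linarith
  have hlt : L * q * t < 1 := by
    rw [lt_div_iff₀ (by positivity)] at ht'
    linarith
  have hpos : 0 < 1 - L * q * t := by linarith
  have h0 : 0 ≤ L * q * t := by positivity
  have hlog : 0 ≤ Real.log (1 / (1 - L * q * t)) := by
    apply Real.log_nonneg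
    rw [le_div_iff₀ hpos]
    linarith
  -- reduction to an integral bound
  have key : ∫ x, ((mconv ρ (gaussMeasure d t)).rnDeriv ρ x).toReal ^ (q:ℝ) ∂ρ
      ≤ (1 - L * q * t) ^ (-(d:ℝ)/2) := by
    have hZ0 : 0 ≤ Z := by
      rw [hZ]; exact integral_nonneg fun x => (Real.exp_pos _).le
    rcases hZ0.eq_or_lt with hz | hZpos
    · have : ρ = 0 := by
        rw [hρ, hf]
        simp [← hz]
      rw [this]
      simp only [integral_zero_measure]
      positivity
    have hVc := hV.continuous
    have hG := aux_grad_cont V hV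
    have hg := aux_gauss_cont (d := d) t
    have hint : Integrable (fun x => Real.exp (-(V x))) := by
      by_contra h
      rw [integral_undef h] at hZ
      exact hZpos.ne' hZ
    have h1 : ∫⁻ x, f x = 1 := by
      rw [hf, ← ofReal_integral_eq_lintegral_ofReal (hint.div_const Z)
        (Filter.Eventually.of_forall fun x => by positivity), integral_div, ← hZ,
        div_self hZpos.ne', ENNReal.ofReal_one]
    have hfm : Measurable f := by rw [hf]; fun_prop
    have hfpos : ∀ x, f x ≠ 0 := by
      intro x
      rw [hf]
      simp only [ne_eq, ENNReal.ofReal_eq_zero, not_le]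
      positivity
    have hftop : ∀ x, f x ≠ ⊤ := fun x => ENNReal.ofReal_ne_top
    have hprob : IsProbabilityMeasure ρ := ⟨by rw [hρ]; simp [h1]⟩
    let γ : EuclideanSpace ℝ (Fin d) → ENNReal := fun y => ENNReal.ofReal (gaussPdf d t y)
    have hγm : Measurable γ := by
      change Measurable fun y => ENNReal.ofReal (gaussPdf d t y)
      fun_prop
    let h : EuclideanSpace ℝ (Fin d) → ENNReal := fun x => ∫⁻ y, γ y * f (-y + x)
    have hhm : Measurable h := by
      apply Measurable.lintegral_prod_right'
        (f := fun p : EuclideanSpace ℝ (Fin d) × EuclideanSpace ℝ (Fin d) => γ p.2 * f (-p.2 + p.1))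
      fun_prop
    have hconvm : mconv ρ (gaussMeasure d t) = volume.withDensity h := by
      have e : gaussMeasure d t = volume.withDensity γ := rfl
      have : SFinite (gaussMeasure d t) := by rw [e]; infer_instance
      change Measure.conv ρ (gaussMeasure d t) = _
      rw [Measure.conv_comm, e, hρ, conv_withDensity_eq_lconvolution hγm hfm]
      rfl
    have hdens : mconv ρ (gaussMeasure d t) = ρ.withDensity (fun x => h x / f x) := by
      rw [hconvm, hρ, ← withDensity_mul _ hfm (show Measurable (fun x => h x / f x) from hhm.div hfm)]
      congr 1
      ext x
      simp only [Pi.mul_apply]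
      exact (ENNReal.mul_div_cancel (hfpos x) (hftop x)).symm
    have hrn : (mconv ρ (gaussMeasure d t)).rnDeriv ρ =ᵐ[ρ] fun x => h x / f x := by
      rw [hdens]
      exact Measure.rnDeriv_withDensity ρ (hhm.div hfm)
    have hle : ∀ x, h x / f x ≤ ENNReal.ofReal (Real.exp (t * ‖gradient V x‖^2/2)) := by
      intro x
      apply ENNReal.div_le_of_le_mul
      rw [mul_comm]
      exact aux_density_le V hV hconv Z hZpos t ht x
    have hmom := aux_moment L V hV hsmooth Z hZpos h1 (q * t) (by positivity)
      (by rw [← mul_assoc]; exact hlt)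
    rw [integral_eq_lintegral_of_nonneg_ae
      (Filter.Eventually.of_forall fun x => by positivity)
      (by
        apply Measurable.aestronglyMeasurable
        exact (Measure.measurable_rnDeriv _ _).ennreal_toReal.pow_const _)]
    apply ENNReal.toReal_le_of_le_ofReal (by positivity)
    rw [mul_assoc]
    refine le_trans ?_ hmom
    calc _ ≤ ∫⁻ x, ENNReal.ofReal (Real.exp (q * t * ‖gradient V x‖^2 / 2)) ∂ρ := by
          apply lintegral_mono_ae
          filter_upwards [hrn] with x hx
          rw [hx]
          apply ENNReal.ofReal_le_ofReal
          calc _ ≤ (Real.exp (t * ‖gradient V x‖^2/2)) ^ (q:ℝ) := by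
                gcongr
                exact ENNReal.toReal_le_of_le_ofReal (by positivity) (hle x)
            _ = _ := by
                rw [← Real.exp_mul]
                congr 1
                ring
      _ = _ := by
          rw [hρ, lintegral_withDensity_eq_lintegral_mul _ hfm (by fun_prop)]
          rfl
  have hI0 : 0 ≤ ∫ x, ((mconv ρ (gaussMeasure d t)).rnDeriv ρ x).toReal ^ (q:ℝ) ∂ρ :=
    integral_nonneg fun x => by positivity
  have hfin : Real.log (∫ x, ((mconv ρ (gaussMeasure d t)).rnDeriv ρ x).toReal ^ (q:ℝ) ∂ρ)
      ≤ (d:ℝ)/2 * Real.log (1 / (1 - L * q * t)) := by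
    rcases hI0.eq_or_lt with hi | hi
    · rw [← hi, Real.log_zero]
      positivity
    · refine (Real.log_le_log hi key).trans_eq ?_
      rw [Real.log_rpow hpos, one_div, Real.log_inv]
      ring
  unfold renyi
  calc _ ≤ (1/((q:ℝ)-1)) * ((d:ℝ)/2 * Real.log (1 / (1 - L * q * t))) := by gcongr
    _ = _ := by
      field_simp
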